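/- Let a∈ℝ\{0}, b>0, n∈ℕ, α≥0 with n>α+1, and let f and a sequence (f_m) in C_α^n([b,∞)) satisfy lim_{m→∞} ‖f − f_m‖_{C_α^n([b,∞))} = 0. Then the oscillatory integrals satisfy lim_{m→∞} I_{a,b}(f_m) = I_{a,b}(f). -/

import Mathlib

/- The bound on the `n`-th derivative together with the initial data at `b` controls all lower
derivatives: `‖f⁽ᵏ⁾(y)‖ ≤ ‖f‖ * y ^ (n - k + α)` for `k ≤ n`. Since `2 * w * y * exp (-w * y ^ 2)`
is minus the derivative of `exp (-w * y ^ 2)`, an integration by parts replaces `g` in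
`∫ exp (-w * y ^ 2) * g y` by `(g / y)'`, at the cost of a boundary term; this consumes one
derivative but lowers the order of growth by two. After `n` steps the order is `α - n < -1`, so the
integral converges absolutely, uniformly in `w` in the closed right half-plane. Hence the limit at
`w = -a * I` exists and is bounded by a multiple of `‖f‖`, and the theorem follows by linearity. -/

open Set Filter MeasureTheory Topology

noncomputable section

/-- Membership in the space `C_α^n([b,∞))`: `f` is `n`-times continuously differentiable
on `[b,∞)` and its `n`-th derivative satisfies a polynomial bound `M·y^α`. -/
def MemCnAlpha (b : ℝ) (n : ℕ) (α : ℝ) (f : ℝ → ℂ) : Prop :=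
  ContDiffOn ℝ n f (Set.Ici b) ∧
    ∃ M : ℝ, 0 ≤ M ∧ ∀ y ∈ Set.Ici b, ‖iteratedDerivWithin n f (Set.Ici b) y‖ ≤ M * y ^ α

/-- The norm on the space `C_α^n([b,∞))`. -/
def CnAlphaNorm (b : ℝ) (n : ℕ) (α : ℝ) (f : ℝ → ℂ) : ℝ :=
  (∑ k ∈ Finset.range n, ‖iteratedDerivWithin k f (Set.Ici b) b‖ / b ^ ((n : ℝ) - k + α)) +
    ⨆ y : Set.Ici b, ‖iteratedDerivWithin n f (Set.Ici b) y‖ / (y : ℝ) ^ α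


/-- The regularized integral `I_{a,b}^{ε,y₀}(f)` (with `y₀ = 0`). -/
def Iab (a b ε : ℝ) (f : ℝ → ℂ) : ℂ :=
  ∫ y in Set.Ioi b,
    Complex.exp (-(ε : ℂ) * y ^ 2) * Complex.exp (Complex.I * a * y ^ 2) * f y

section Symbol

variable {E : Type*} [NormedAddCommGroup E] [NormedSpace ℝ E]
  {b β γ C D : ℝ} {n : ℕ} {g : ℝ → E}

/-- `IsSymbolWith b n β C g` says that `g` is a symbol of order `β` on `[b, ∞)`, with regularity `n`
and constant `C`: each derivative up to the `n`-th exists and lowers the growth rate `y ^ β` by one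
power. Derivatives are taken within `[b, ∞)`, hence are one-sided at `b`. -/
structure IsSymbolWith (b : ℝ) (n : ℕ) (β C : ℝ) (g : ℝ → E) : Prop where
  contDiffOn : ContDiffOn ℝ n g (Ici b)
  norm_iteratedDerivWithin_le : ∀ k ≤ n, ∀ y ∈ Ici b,
    ‖iteratedDerivWithin k g (Ici b) y‖ ≤ C * y ^ (β - k)

namespace IsSymbolWith

protected lemma continuousOn (hg : IsSymbolWith b n β C g) : ContinuousOn g (Ici b) :=
  hg.contDiffOn.continuousOn

lemma norm_le (hg : IsSymbolWith b n β C g) {y : ℝ} (hy : y ∈ Ici b) : ‖g y‖ ≤ C * y ^ β := by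
  simpa using hg.norm_iteratedDerivWithin_le 0 n.zero_le y hy

lemma nonneg (hb : 0 < b) (hg : IsSymbolWith b n β C g) : 0 ≤ C :=
  nonneg_of_mul_nonneg_left ((norm_nonneg _).trans (hg.norm_le self_mem_Ici))
    (Real.rpow_pos_of_pos hb β)

protected lemma derivWithin (hg : IsSymbolWith b (n + 1) β C g) :
    IsSymbolWith b n (β - 1) C (derivWithin g (Ici b)) where
  contDiffOn := hg.contDiffOn.derivWithin (uniqueDiffOn_Ici b) (by norm_cast)
  norm_iteratedDerivWithin_le k hk y hy := by
    have hbound := hg.norm_iteratedDerivWithin_le (k + 1) (by lia) y hy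
    rwa [iteratedDerivWithin_succ', Nat.cast_succ, add_comm, ← sub_sub] at hbound

protected lemma inv (hb : 0 < b) (n : ℕ) : IsSymbolWith b n (-1) n.factorial fun y : ℝ => y⁻¹ where
  contDiffOn := contDiffOn_id.inv fun _ hy => (hb.trans_le hy).ne'
  norm_iteratedDerivWithin_le k hk y hy := by
    have hy₀ : 0 < y := hb.trans_le hy
    have hderiv : iteratedDerivWithin k (fun y : ℝ => y⁻¹) (Ici b) y
        = (-1) ^ k * k.factorial * y ^ (-1 - k : ℤ) := by
      rw [iteratedDerivWithin_eq_iteratedDeriv (uniqueDiffOn_Ici b) (contDiffAt_inv ℝ hy₀.ne') hy,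
        iteratedDeriv_eq_iterate]
      exact iter_deriv_inv k y
    have hpow : y ^ (-1 - k : ℤ) = y ^ (-1 - k : ℝ) := by
      rw [← Real.rpow_intCast]
      push_cast
      rfl
    rw [hderiv, hpow, norm_mul, norm_mul, norm_pow, norm_neg, norm_one, one_pow, one_mul,
      Real.norm_natCast, Real.norm_of_nonneg (by positivity)]
    gcongr

protected lemma smul (hb : 0 < b) {f : ℝ → ℝ} (hf : IsSymbolWith b n β C f)
    (hg : IsSymbolWith b n γ D g) :
    IsSymbolWith b n (β + γ) (2 ^ n * (C * D)) fun y => f y • g y where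
  contDiffOn := hf.contDiffOn.smul hg.contDiffOn
  norm_iteratedDerivWithin_le k hk y hy := by
    have hy₀ : 0 < y := hb.trans_le hy
    have hC : 0 ≤ C := hf.nonneg hb
    have hD : 0 ≤ D := hg.nonneg hb
    have hterm : ∀ i ∈ Finset.range (k + 1),
        (k.choose i : ℝ) * ‖iteratedDerivWithin i f (Ici b) y‖ *
          ‖iteratedDerivWithin (k - i) g (Ici b) y‖
        ≤ k.choose i * (C * D * y ^ (β + γ - k)) := by
      intro i hi
      have hik : i ≤ k := Finset.mem_range_succ_iff.mp hi
      calc _ ≤ (k.choose i : ℝ) * (C * y ^ (β - i)) * (D * y ^ (γ - (k - i : ℕ))) := by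
            gcongr
            · exact hf.norm_iteratedDerivWithin_le i (hik.trans hk) y hy
            · exact hg.norm_iteratedDerivWithin_le (k - i) (by lia) y hy
        _ = k.choose i * (C * D * (y ^ (β - i) * y ^ (γ - (k - i : ℕ)))) := by ring
        _ = k.choose i * (C * D * y ^ (β + γ - k)) := by
            rw [← Real.rpow_add hy₀, Nat.cast_sub hik]
            ring_nf
    calc ‖iteratedDerivWithin k (fun y => f y • g y) (Ici b) y‖
        ≤ ∑ i ∈ Finset.range (k + 1), (k.choose i : ℝ) * ‖iteratedDerivWithin i f (Ici b) y‖ *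
            ‖iteratedDerivWithin (k - i) g (Ici b) y‖ := by
          simpa only [norm_iteratedFDerivWithin_eq_norm_iteratedDerivWithin] using
            norm_iteratedFDerivWithin_smul_le hf.contDiffOn hg.contDiffOn (uniqueDiffOn_Ici b) hy
              (Nat.cast_le.mpr hk)
      _ ≤ ∑ i ∈ Finset.range (k + 1), k.choose i * (C * D * y ^ (β + γ - k)) :=
          Finset.sum_le_sum hterm
      _ = 2 ^ k * (C * D) * y ^ (β + γ - k) := by
          rw [← Finset.sum_mul, ← Nat.cast_sum, Nat.sum_range_choose]
          push_cast
          ring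
      _ ≤ 2 ^ n * (C * D) * y ^ (β + γ - k) := by
          gcongr
          exact one_le_two

protected lemma inv_smul (hb : 0 < b) (hg : IsSymbolWith b n β C g) :
    IsSymbolWith b n (β - 1) (2 ^ n * (n.factorial * C)) fun y => y⁻¹ • g y := by
  simpa only [neg_add_eq_sub] using (IsSymbolWith.inv hb n).smul hb hg

end IsSymbolWith

lemma norm_le_mul_rpow_of_norm_derivWithin_le {N p : ℝ} (hb : 0 < b) (hp : 1 ≤ p)
    (hg : DifferentiableOn ℝ g (Ici b)) (hgb : ‖g b‖ ≤ N * b ^ p)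
    (hg' : ∀ y ∈ Ici b, ‖derivWithin g (Ici b) y‖ ≤ N * y ^ (p - 1)) {y : ℝ} (hy : y ∈ Ici b) :
    ‖g y‖ ≤ N * y ^ p := by
  have hpos : ∀ x ∈ Ico b y, 0 < x := fun x hx => hb.trans_le hx.1
  have hpow : ∀ x, 0 < x → HasDerivAt (fun x => N * x ^ p) (N * (p * x ^ (p - 1))) x :=
    fun x hx => (Real.hasDerivAt_rpow_const (Or.inl hx.ne')).const_mul N
  refine image_norm_le_of_norm_deriv_right_le_deriv_boundary' (f' := derivWithin g (Ici b))
    (hg.continuousOn.mono Icc_subset_Ici_self)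
    (fun x hx => ((hg x hx.1).hasDerivWithinAt).mono (Ici_subset_Ici.mpr hx.1)) hgb
    (fun x hx => (hpow x (hb.trans_le hx.1)).continuousAt.continuousWithinAt)
    (fun x hx => (hpow x (hpos x hx)).hasDerivWithinAt) (fun x hx => ?_) (right_mem_Icc.mpr hy)
  have hbound : ‖derivWithin g (Ici b) x‖ ≤ N * x ^ (p - 1) := hg' x hx.1
  calc ‖derivWithin g (Ici b) x‖ ≤ 1 * (N * x ^ (p - 1)) := by rwa [one_mul]
    _ ≤ p * (N * x ^ (p - 1)) := by
        gcongr
        exact (norm_nonneg _).trans hbound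
    _ = N * (p * x ^ (p - 1)) := by ring

lemma isSymbolWith_of_norm_iteratedDerivWithin_le {N : ℝ} (hb : 0 < b) (hβ : n ≤ β)
    (hg : ContDiffOn ℝ n g (Ici b))
    (hinit : ∀ k < n, ‖iteratedDerivWithin k g (Ici b) b‖ ≤ N * b ^ (β - k))
    (htop : ∀ y ∈ Ici b, ‖iteratedDerivWithin n g (Ici b) y‖ ≤ N * y ^ (β - n)) :
    IsSymbolWith b n β N g := by
  refine ⟨hg, fun k hk => ?_⟩
  induction hk using Nat.decreasingInduction with
  | self => exact htop
  | of_succ k hk ih =>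
    have hp : 1 ≤ β - k := by
      have : (k : ℝ) + 1 ≤ n := mod_cast hk
      linarith
    refine fun y hy => norm_le_mul_rpow_of_norm_derivWithin_le hb hp
      (hg.differentiableOn_iteratedDerivWithin (mod_cast hk) (uniqueDiffOn_Ici b)) (hinit k hk)
      (fun x hx => ?_) hy
    rw [← iteratedDerivWithin_succ, sub_sub, ← Nat.cast_succ]
    exact ih x hx

end Symbol

section FresnelIntegral

variable {E : Type*} [NormedAddCommGroup E] [NormedSpace ℂ E]
  {b β C : ℝ} {n : ℕ} {w : ℂ} {g : ℝ → E}

/-- The Gaussian integral `∫_b^∞ exp (-w y²) g(y) dy`. The regularized integral `Iab a b ε g` is its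
value at `w = ε - a * I`, and the oscillatory integral is the limit at `w = -a * I`. -/
def fresnelIntegral (b : ℝ) (w : ℂ) (g : ℝ → E) : E :=
  ∫ y in Ioi b, Complex.exp (-w * y ^ 2) • g y

/-- The function `(g / y)'` which an integration by parts against `exp (-w y²)` puts in place
of `g`. -/
def fresnelTranspose (b : ℝ) (g : ℝ → E) : ℝ → E :=
  derivWithin (fun y : ℝ => y⁻¹ • g y) (Ici b)

lemma hasDerivAt_cexp_smul_inv_smul (hb : 0 < b) (hg : DifferentiableOn ℝ g (Ici b)) (w : ℂ)
    {y : ℝ} (hy : y ∈ Ioi b) :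
    HasDerivAt (fun y : ℝ => Complex.exp (-w * y ^ 2) • y⁻¹ • g y)
      (Complex.exp (-w * y ^ 2) • fresnelTranspose b g y
        - (2 * w) • Complex.exp (-w * y ^ 2) • g y) y := by
  have hy₀ : (y : ℂ) ≠ 0 := mod_cast (hb.trans hy).ne'
  have hexp : HasDerivAt (fun y : ℝ => Complex.exp (-w * y ^ 2))
      (Complex.exp (-w * y ^ 2) * (-w * (2 * y))) y := by
    simpa using (((hasDerivAt_id (y : ℂ)).pow 2).const_mul (-w)).cexp.comp_ofReal
  have hquot : HasDerivAt (fun y : ℝ => y⁻¹ • g y) (fresnelTranspose b g y) y :=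
    ((differentiableAt_inv (hb.trans hy).ne').differentiableWithinAt.smul
      (hg y (Ioi_subset_Ici_self hy))).hasDerivWithinAt.hasDerivAt (Ici_mem_nhds hy)
  refine (hexp.smul hquot).congr_deriv ?_
  rw [sub_eq_add_neg, ← Complex.coe_smul, smul_smul, smul_smul, ← neg_smul]
  congr 2
  push_cast
  field_simp

namespace IsSymbolWith

protected lemma fresnelTranspose (hb : 0 < b) (hg : IsSymbolWith b (n + 1) β C g) :
    IsSymbolWith b n (β - 2) (2 ^ (n + 1) * ((n + 1).factorial * C)) (fresnelTranspose b g) := by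
  have h := (hg.inv_smul hb).derivWithin
  rwa [sub_sub, one_add_one_eq_two] at h

lemma aestronglyMeasurable_cexp_smul (hg : IsSymbolWith b n β C g) (w : ℂ) :
    AEStronglyMeasurable (fun y : ℝ => Complex.exp (-w * y ^ 2) • g y)
      (volume.restrict (Ioi b)) := by
  refine ContinuousOn.aestronglyMeasurable ?_ measurableSet_Ioi
  exact ContinuousOn.smul (by fun_prop) (hg.continuousOn.mono Ioi_subset_Ici_self)

lemma norm_cexp_smul_le (hg : IsSymbolWith b n β C g) (w : ℂ) {y : ℝ} (hy : y ∈ Ici b) :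
    ‖Complex.exp (-w * y ^ 2) • g y‖ ≤ C * (y ^ β * Real.exp (-w.re * y ^ 2)) := by
  rw [norm_smul, norm_cexp_neg_mul_sq]
  calc Real.exp (-w.re * y ^ 2) * ‖g y‖ ≤ Real.exp (-w.re * y ^ 2) * (C * y ^ β) := by
        gcongr
        exact hg.norm_le hy
    _ = C * (y ^ β * Real.exp (-w.re * y ^ 2)) := by ring

lemma norm_cexp_smul_le_of_re_nonneg (hw : 0 ≤ w.re) (hg : IsSymbolWith b n β C g)
    {y : ℝ} (hy : y ∈ Ici b) : ‖Complex.exp (-w * y ^ 2) • g y‖ ≤ C * y ^ β := by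
  rw [norm_smul, norm_cexp_neg_mul_sq]
  have hexp : Real.exp (-w.re * y ^ 2) ≤ 1 := by
    rw [Real.exp_le_one_iff, neg_mul, neg_nonpos]
    positivity
  exact (mul_le_of_le_one_left (norm_nonneg _) hexp).trans (hg.norm_le hy)

lemma integrableOn_cexp_smul (hb : 0 < b) (hw : 0 < w.re) (hg : IsSymbolWith b n β C g) :
    IntegrableOn (fun y : ℝ => Complex.exp (-w * y ^ 2) • g y) (Ioi b) := by
  have hgauss : IntegrableOn (fun y : ℝ => y ^ β * Real.exp (-w.re * y ^ 2)) (Ioi b) := by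
    refine integrable_of_isBigO_exp_neg one_half_pos ?_
      (rpow_mul_exp_neg_mul_sq_isLittleO_exp_neg hw β).isBigO
    exact (continuousOn_id.rpow_const fun y hy => Or.inl (hb.trans_le hy).ne').mul (by fun_prop)
  refine (hgauss.const_mul C).mono' (hg.aestronglyMeasurable_cexp_smul w) ?_
  exact (ae_restrict_mem measurableSet_Ioi).mono fun y hy =>
    hg.norm_cexp_smul_le w (Ioi_subset_Ici_self hy)

lemma fresnelIntegral_eq [CompleteSpace E] (hb : 0 < b) (hw : 0 < w.re)
    (hg : IsSymbolWith b (n + 1) β C g) :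
    fresnelIntegral b w g = (2 * w)⁻¹ • (Complex.exp (-w * b ^ 2) • b⁻¹ • g b +
      fresnelIntegral b w (fresnelTranspose b g)) := by
  have hw₀ : 2 * w ≠ 0 := mul_ne_zero two_ne_zero fun h => hw.ne' (by rw [h, Complex.zero_re])
  have hderiv := fun y =>
    hasDerivAt_cexp_smul_inv_smul hb (hg.contDiffOn.differentiableOn (by simp)) w (y := y)
  have hscaled : IntegrableOn (fun y : ℝ => (2 * w) • Complex.exp (-w * y ^ 2) • g y) (Ioi b) :=
    (hg.integrableOn_cexp_smul hb hw).smul (2 * w)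
  have htrans := (hg.fresnelTranspose hb).integrableOn_cexp_smul hb hw
  have hcont : ContinuousWithinAt (fun y : ℝ => Complex.exp (-w * y ^ 2) • y⁻¹ • g y) (Ici b) b :=
    ContinuousWithinAt.smul (by fun_prop) ((hg.inv_smul hb).continuousOn b self_mem_Ici)
  have hlim := tendsto_zero_of_hasDerivAt_of_integrableOn_Ioi hderiv (htrans.sub hscaled)
    ((hg.inv_smul hb).integrableOn_cexp_smul hb hw)
  have hparts := integral_Ioi_of_hasDerivAt_of_tendsto hcont hderiv (htrans.sub hscaled) hlim
  rw [integral_sub htrans hscaled, integral_smul, zero_sub, sub_eq_iff_eq_add] at hparts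
  rw [eq_inv_smul_iff₀ hw₀, fresnelIntegral, fresnelIntegral, hparts]
  abel

lemma continuousOn_fresnelIntegral (hb : 0 < b) (hβ : β < -1) (hg : IsSymbolWith b n β C g) :
    ContinuousOn (fun w => fresnelIntegral b w g) {w | 0 ≤ w.re} := by
  refine continuousOn_of_dominated (bound := fun y => C * y ^ β)
    (fun w _ => hg.aestronglyMeasurable_cexp_smul w) (fun w hw => ?_)
    ((integrableOn_Ioi_rpow_of_lt hβ hb).const_mul C) (Eventually.of_forall fun y => by fun_prop)
  exact (ae_restrict_mem measurableSet_Ioi).mono fun y hy =>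
    hg.norm_cexp_smul_le_of_re_nonneg hw (Ioi_subset_Ici_self hy)

lemma norm_fresnelIntegral_le (hb : 0 < b) (hβ : β < -1) (hw : 0 ≤ w.re)
    (hg : IsSymbolWith b n β C g) :
    ‖fresnelIntegral b w g‖ ≤ (∫ y in Ioi b, y ^ β) * C := by
  rw [mul_comm, ← integral_const_mul]
  refine norm_integral_le_of_norm_le ((integrableOn_Ioi_rpow_of_lt hβ hb).const_mul C) ?_
  exact (ae_restrict_mem measurableSet_Ioi).mono fun y hy =>
    hg.norm_cexp_smul_le_of_re_nonneg hw (Ioi_subset_Ici_self hy)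

end IsSymbolWith

lemma exists_tendsto_fresnelIntegral_norm_le [CompleteSpace E] (hb : 0 < b) (hw : 0 ≤ w.re)
    (hw₀ : w ≠ 0) (hβ : β - 2 * n < -1) :
    ∃ K : ℝ, ∀ (C : ℝ) (g : ℝ → E), IsSymbolWith b n β C g →
      ∃ L : E, Tendsto (fun z => fresnelIntegral b z g) (𝓝[{z | 0 < z.re}] w) (𝓝 L) ∧
        ‖L‖ ≤ K * C := by
  induction n generalizing β with
  | zero =>
    replace hβ : β < -1 := by simpa using hβ
    refine ⟨∫ y in Ioi b, y ^ β, fun C g hg =>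
      ⟨fresnelIntegral b w g, ?_, hg.norm_fresnelIntegral_le hb hβ hw⟩⟩
    exact (hg.continuousOn_fresnelIntegral hb hβ w hw).mono_left
      (nhdsWithin_mono w fun z (hz : 0 < z.re) => hz.le)
  | succ n ih =>
    obtain ⟨K, hK⟩ := ih (β := β - 2) (by push_cast at hβ; linarith)
    refine ⟨‖(2 * w)⁻¹‖ * (b⁻¹ * b ^ β + K * (2 ^ (n + 1) * (n + 1).factorial)), fun C g hg => ?_⟩
    obtain ⟨L, hL, hL_le⟩ := hK _ _ (hg.fresnelTranspose hb)
    refine ⟨(2 * w)⁻¹ • (Complex.exp (-w * b ^ 2) • b⁻¹ • g b + L), ?_, ?_⟩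
    · have hparts : (fun z => (2 * z)⁻¹ • (Complex.exp (-z * b ^ 2) • b⁻¹ • g b +
          fresnelIntegral b z (fresnelTranspose b g))) =ᶠ[𝓝[{z | 0 < z.re}] w]
          fun z => fresnelIntegral b z g :=
        eventually_nhdsWithin_of_forall fun z hz => (hg.fresnelIntegral_eq hb hz).symm
      refine Tendsto.congr' hparts (Tendsto.smul ?_ (Tendsto.add ?_ hL))
      · exact (ContinuousAt.inv₀ (by fun_prop) (mul_ne_zero two_ne_zero hw₀)).mono_left
          nhdsWithin_le_nhds
      · exact (Continuous.tendsto (by fun_prop) w).mono_left nhdsWithin_le_nhds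
    · have hboundary : ‖Complex.exp (-w * b ^ 2) • b⁻¹ • g b‖ ≤ b⁻¹ * (C * b ^ β) := by
        rw [smul_comm, norm_smul, Real.norm_of_nonneg (by positivity)]
        gcongr
        exact hg.norm_cexp_smul_le_of_re_nonneg hw self_mem_Ici
      calc ‖(2 * w)⁻¹ • (Complex.exp (-w * b ^ 2) • b⁻¹ • g b + L)‖
          ≤ ‖(2 * w)⁻¹‖ *
              (b⁻¹ * (C * b ^ β) + K * (2 ^ (n + 1) * ((n + 1).factorial * C))) := by
            rw [norm_smul]
            gcongr
            exact norm_add_le_of_le hboundary hL_le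
        _ = _ := by ring

end FresnelIntegral

section OscillatoryIntegral

variable {a b α ε : ℝ} {n : ℕ} {f g : ℝ → ℂ}

lemma norm_iteratedDerivWithin_left_le (hb : 0 < b) {k : ℕ} (hk : k < n) :
    ‖iteratedDerivWithin k g (Ici b) b‖ ≤ CnAlphaNorm b n α g * b ^ ((n : ℝ) - k + α) := by
  have hsup : 0 ≤ ⨆ y : Ici b, ‖iteratedDerivWithin n g (Ici b) y‖ / (y : ℝ) ^ α :=
    Real.iSup_nonneg fun y => div_nonneg (norm_nonneg _) (Real.rpow_nonneg (hb.le.trans y.2) α)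
  rw [← div_le_iff₀ (Real.rpow_pos_of_pos hb _)]
  exact (Finset.single_le_sum (f := fun k : ℕ => ‖iteratedDerivWithin k g (Ici b) b‖ /
    b ^ ((n : ℝ) - k + α)) (fun _ _ => by positivity) (Finset.mem_range.mpr hk)).trans
    (le_add_of_nonneg_right hsup)

namespace MemCnAlpha

lemma norm_iteratedDerivWithin_le (hb : 0 < b) (hg : MemCnAlpha b n α g) {y : ℝ}
    (hy : y ∈ Ici b) :
    ‖iteratedDerivWithin n g (Ici b) y‖ ≤ CnAlphaNorm b n α g * y ^ α := by
  obtain ⟨-, M, -, hM⟩ := hg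
  have hpow : ∀ x : Ici b, 0 < (x : ℝ) ^ α := fun x => Real.rpow_pos_of_pos (hb.trans_le x.2) α
  have hbdd : BddAbove (range fun x : Ici b =>
      ‖iteratedDerivWithin n g (Ici b) x‖ / (x : ℝ) ^ α) :=
    ⟨M, forall_mem_range.mpr fun x => (div_le_iff₀ (hpow x)).mpr (hM x x.2)⟩
  rw [← div_le_iff₀ (hpow ⟨y, hy⟩)]
  exact (le_ciSup hbdd ⟨y, hy⟩).trans
    (le_add_of_nonneg_left (Finset.sum_nonneg fun k _ => by positivity))

lemma isSymbolWith (hb : 0 < b) (hα : 0 ≤ α) (hg : MemCnAlpha b n α g) :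
    IsSymbolWith b n (n + α) (CnAlphaNorm b n α g) g := by
  refine isSymbolWith_of_norm_iteratedDerivWithin_le hb (le_add_of_nonneg_right hα) hg.1
    (fun k hk => ?_) (fun y hy => ?_)
  · rw [add_sub_right_comm]
    exact norm_iteratedDerivWithin_left_le hb hk
  · rw [add_sub_cancel_left]
    exact hg.norm_iteratedDerivWithin_le hb hy

protected lemma sub (hf : MemCnAlpha b n α f) (hg : MemCnAlpha b n α g) :
    MemCnAlpha b n α fun y => f y - g y := by
  obtain ⟨hf, M, hM₀, hM⟩ := hf
  obtain ⟨hg, N, hN₀, hN⟩ := hg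
  refine ⟨hf.sub hg, M + N, add_nonneg hM₀ hN₀, fun y hy => ?_⟩
  have hsub := iteratedDerivWithin_sub hy (uniqueDiffOn_Ici b) (hf y hy) (hg y hy)
  rw [← Pi.sub_def, hsub, add_mul]
  exact norm_sub_le_of_le (hM y hy) (hN y hy)

end MemCnAlpha

lemma Iab_eq_fresnelIntegral (a b ε : ℝ) (g : ℝ → ℂ) :
    Iab a b ε g = fresnelIntegral b (ε - a * Complex.I) g := by
  refine integral_congr_ae (Eventually.of_forall fun y => ?_)
  simp only [smul_eq_mul, ← Complex.exp_add]
  ring_nf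

/-- The oscillatory integral `I_{a,b}(f)`, the limit of the regularized integrals as `ε → 0⁺`. It
has an unspecified value when this limit does not exist. -/
def oscIntegral (a b : ℝ) (f : ℝ → ℂ) : ℂ :=
  limUnder (𝓝[>] 0) fun ε : ℝ => Iab a b ε f

lemma exists_tendsto_Iab_norm_le (ha : a ≠ 0) (hb : 0 < b) (hα : 0 ≤ α) (hn : α + 1 < n) :
    ∃ K : ℝ, ∀ g, MemCnAlpha b n α g → ∃ L : ℂ,
      Tendsto (fun ε : ℝ => Iab a b ε g) (𝓝[>] 0) (𝓝 L) ∧ ‖L‖ ≤ K * CnAlphaNorm b n α g := by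
  have hw₀ : ((0 : ℝ) - a * Complex.I : ℂ) ≠ 0 := by simp [ha]
  have hpath : Tendsto (fun ε : ℝ => (ε - a * Complex.I : ℂ)) (𝓝[>] 0)
      (𝓝[{z | 0 < z.re}] ((0 : ℝ) - a * Complex.I)) :=
    tendsto_nhdsWithin_iff.mpr ⟨(Continuous.tendsto (by fun_prop) 0).mono_left nhdsWithin_le_nhds,
      eventually_nhdsWithin_of_forall fun ε hε => by simpa using hε⟩
  obtain ⟨K, hK⟩ := exists_tendsto_fresnelIntegral_norm_le (E := ℂ) (β := n + α) (n := n) hb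
    (by simp) hw₀ (by linarith)
  refine ⟨K, fun g hg => ?_⟩
  obtain ⟨L, hL, hL_le⟩ := hK _ g (hg.isSymbolWith hb hα)
  refine ⟨L, ?_, hL_le⟩
  simpa only [Iab_eq_fresnelIntegral, Function.comp_def] using hL.comp hpath

lemma tendsto_Iab_oscIntegral (ha : a ≠ 0) (hb : 0 < b) (hα : 0 ≤ α) (hn : α + 1 < n)
    (hg : MemCnAlpha b n α g) :
    Tendsto (fun ε : ℝ => Iab a b ε g) (𝓝[>] 0) (𝓝 (oscIntegral a b g)) := by
  obtain ⟨K, hK⟩ := exists_tendsto_Iab_norm_le ha hb hα hn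
  obtain ⟨L, hL, -⟩ := hK g hg
  exact tendsto_nhds_limUnder ⟨L, hL⟩

lemma exists_norm_oscIntegral_le (ha : a ≠ 0) (hb : 0 < b) (hα : 0 ≤ α) (hn : α + 1 < n) :
    ∃ K : ℝ, ∀ g, MemCnAlpha b n α g → ‖oscIntegral a b g‖ ≤ K * CnAlphaNorm b n α g := by
  obtain ⟨K, hK⟩ := exists_tendsto_Iab_norm_le ha hb hα hn
  refine ⟨K, fun g hg => ?_⟩
  obtain ⟨L, hL, hL_le⟩ := hK g hg
  rwa [oscIntegral, hL.limUnder_eq]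

lemma Iab_sub (hb : 0 < b) (hα : 0 ≤ α) (hε : 0 < ε) (hf : MemCnAlpha b n α f)
    (hg : MemCnAlpha b n α g) :
    Iab a b ε (fun y => f y - g y) = Iab a b ε f - Iab a b ε g := by
  have hw : 0 < (ε - a * Complex.I : ℂ).re := by simpa using hε
  simp only [Iab_eq_fresnelIntegral, fresnelIntegral, smul_sub]
  exact integral_sub ((hf.isSymbolWith hb hα).integrableOn_cexp_smul hb hw)
    ((hg.isSymbolWith hb hα).integrableOn_cexp_smul hb hw)

lemma oscIntegral_sub (ha : a ≠ 0) (hb : 0 < b) (hα : 0 ≤ α) (hn : α + 1 < n)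
    (hf : MemCnAlpha b n α f) (hg : MemCnAlpha b n α g) :
    oscIntegral a b (fun y => f y - g y) = oscIntegral a b f - oscIntegral a b g := by
  have hlim := (tendsto_Iab_oscIntegral ha hb hα hn hf).sub
    (tendsto_Iab_oscIntegral ha hb hα hn hg)
  refine (hlim.congr' ?_).limUnder_eq
  exact eventually_nhdsWithin_of_forall fun ε hε => (Iab_sub hb hα hε hf hg).symm

end OscillatoryIntegral

/-- if `f_m → f` in `C_α^n([b,∞))` with `n > α + 1`, then the oscillatory
integrals `I_{a,b}(f_m)` exist and converge to `I_{a,b}(f)`. -/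
theorem stmt14 (a : ℝ) (ha : a ≠ 0) (b : ℝ) (hb : 0 < b) (n : ℕ) (α : ℝ) (hα : 0 ≤ α)
    (hn : α + 1 < n) (f : ℝ → ℂ) (hf : MemCnAlpha b n α f) (fm : ℕ → ℝ → ℂ)
    (hfm : ∀ m, MemCnAlpha b n α (fm m))
    (hconv : Filter.Tendsto (fun m => CnAlphaNorm b n α (fun y => f y - fm m y))
      Filter.atTop (𝓝 0)) :
    ∃ (L : ℂ) (Lm : ℕ → ℂ),
      Filter.Tendsto (fun ε : ℝ => Iab a b ε f) (𝓝[>] 0) (𝓝 L) ∧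
      (∀ m, Filter.Tendsto (fun ε : ℝ => Iab a b ε (fm m)) (𝓝[>] 0) (𝓝 (Lm m))) ∧
      Filter.Tendsto Lm Filter.atTop (𝓝 L) := by
  obtain ⟨K, hK⟩ := exists_norm_oscIntegral_le ha hb hα hn
  refine ⟨oscIntegral a b f, fun m => oscIntegral a b (fm m),
    tendsto_Iab_oscIntegral ha hb hα hn hf,
    fun m => tendsto_Iab_oscIntegral ha hb hα hn (hfm m), ?_⟩
  have hbound (m : ℕ) : ‖oscIntegral a b (fm m) - oscIntegral a b f‖ ≤
      K * CnAlphaNorm b n α (fun y => f y - fm m y) := by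
    rw [norm_sub_rev, ← oscIntegral_sub ha hb hα hn hf (hfm m)]
    exact hK _ (hf.sub (hfm m))
  rw [tendsto_iff_norm_sub_tendsto_zero]
  exact squeeze_zero (fun _ => norm_nonneg _) hbound (by simpa using hconv.const_mul K)
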